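/- Let 𝔖 be the set of finite sequences (i₁,...,iₙ) over {0,1,2} with iₙ ≠ 0 and iⱼ ≠ 1 for all j < n. For σ = (i₁,...,iₙ) ∈ 𝔖, set v(σ) = Σⱼ₌₁ⁿ iⱼ/3ʲ, and for k ∈ ℕ set a_{σ,k} = v(σ) − (−1)^{iₙ}/(k·3^{n+1}). Let D = {v(σ) : σ ∈ 𝔖} and E = ⋃_σ {a_{σ,k} : k ∈ ℕ}. Then E is a bounded discrete subset of ℝ, D has no isolated points, and D is contained in the closure of E; consequently, the closure of E is not a finite union of discrete sets. -/

import Mathlib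

/-- A subset `S` of a topological space is discrete if every point of `S` has an
open neighborhood meeting `S` only in that point. -/
def IsDiscreteIn {T : Type*} [TopologicalSpace T] (S : Set T) : Prop :=
  ∀ x ∈ S, ∃ U : Set T, IsOpen U ∧ U ∩ S = {x}

/-- Membership in `𝔖`: a nonempty finite sequence over `{0,1,2}` whose last
entry is nonzero and whose non-final entries are never `1`. -/
def Sgood (l : List ℕ) : Prop :=
  l ≠ [] ∧ (∀ x ∈ l, x ≤ 2) ∧ l.getD (l.length - 1) 0 ≠ 0 ∧
    ∀ j, j < l.length - 1 → l.getD j 0 ≠ 1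

/-- `v(σ) = ∑_{j=1}^{n} i_j / 3^j`. -/
noncomputable def vval (l : List ℕ) : ℝ :=
  ∑ j ∈ Finset.range l.length, (l.getD j 0 : ℝ) / 3 ^ (j + 1)

/-- `u(σ) = ∑_{j=1}^{n-1} i_j / 3^j`. -/
noncomputable def uval (l : List ℕ) : ℝ :=
  ∑ j ∈ Finset.range (l.length - 1), (l.getD j 0 : ℝ) / 3 ^ (j + 1)

/-- `a_{σ,k} = v(σ) - (-1)^{i_n} / (k · 3^{n+1})`. -/
noncomputable def aval (l : List ℕ) (k : ℕ) : ℝ :=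
  vval l - (-1 : ℝ) ^ (l.getD (l.length - 1) 0) / (k * 3 ^ (l.length + 1))

/-!
The points of `D` are the endpoints of the gaps of the Cantor set, and `E` puts into every gap two
sequences, one converging to each endpoint. Both sets are controlled by the two contractions
`x ↦ (d + x) / 3`, `d ∈ {0, 2}`, which prepend the digit `d` to a sequence. They map `D` into
itself, and `0` and `1` are accumulation points of `D`; as `1 / 3` and `2 / 3` are the images of `1`
and `0`, every point of `D` is an accumulation point of `D`. In the other direction, `E` is discrete
inside the middle gap `(1 / 3, 2 / 3)`, and outside it consists of two rescaled copies of itself.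

The last claim is a general fact: removing a discrete set from a nonempty dense-in-itself set of a
T₁ space leaves a dense subset, which is therefore again nonempty and dense-in-itself. Hence
finitely many discrete sets cannot cover it.
-/

open Filter Set Topology

section Topology

variable {X : Type*} [TopologicalSpace X] {C S : Set X}

lemma isDiscreteIn_iff_isDiscrete : IsDiscreteIn S ↔ IsDiscrete S :=
  isDiscrete_iff_forall_mem_exists_isOpen.symm

lemma isDiscrete_iff_eventually_eq :
    IsDiscrete S ↔ ∀ x ∈ S, ∀ᶠ y in 𝓝 x, y ∈ S → y = x := by
  refine isDiscrete_iff_nhdsWithin.trans (forall₂_congr fun x hx ↦ ?_)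
  rw [← (pure_le_nhdsWithin hx).ge_iff_eq', le_pure_iff, mem_nhdsWithin_iff_eventually]
  rfl

lemma preperfect_iff_mem_closure_sdiff : Preperfect C ↔ ∀ x ∈ C, x ∈ closure (C \ {x}) := by
  simp only [Preperfect, accPt_principal_iff_clusterPt, mem_closure_iff_clusterPt]

lemma preperfect_of_subset_closure [T1Space X] {A : Set X} (hC : Preperfect C) (hAC : A ⊆ C)
    (hCA : C ⊆ closure A) : Preperfect A := fun x hx ↦ by
  rw [← mem_derivedSet, ← derivedSet_closure]
  exact derivedSet_mono _ _ hCA (hC x (hAC hx))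

lemma subset_closure_sdiff_of_isDiscrete (hC : Preperfect C) (hS : IsDiscrete S) :
    C ⊆ closure (C \ S) := by
  intro x hxC
  by_cases hxS : x ∈ S
  · have hisolated := isDiscrete_iff_eventually_eq.mp hS x hxS
    have hcrowded := accPt_iff_frequently.mp (hC x hxC)
    exact mem_closure_iff_frequently.mpr <|
      (hcrowded.and_eventually hisolated).mono fun y ⟨⟨hne, hyC⟩, heq⟩ ↦
        ⟨hyC, fun hyS ↦ hne (heq hyS)⟩
  · exact subset_closure ⟨hxC, hxS⟩

theorem not_subset_sUnion_of_isDiscrete [T1Space X] (hC : Preperfect C) (hne : C.Nonempty)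
    {T : Set (Set X)} (hT : T.Finite) (hdisc : ∀ S ∈ T, IsDiscrete S) : ¬C ⊆ ⋃₀ T := by
  induction T, hT using Set.Finite.induction_on generalizing C with
  | empty => simpa [subset_empty_iff] using hne.ne_empty
  | @insert S T _ _ ih =>
    have hdense := subset_closure_sdiff_of_isDiscrete hC (hdisc S (mem_insert S T))
    rw [sUnion_insert, ← sdiff_subset_iff]
    exact ih (preperfect_of_subset_closure hC sdiff_subset hdense)
      (closure_nonempty_iff.mp (hne.mono hdense)) fun S' hS' ↦ hdisc S' (mem_insert_of_mem S hS')

end Topology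

lemma inv_natCast_mem_Ioc {k : ℕ} (hk : 1 ≤ k) : (k : ℝ)⁻¹ ∈ Ioc 0 1 :=
  ⟨by positivity, Nat.cast_inv_le_one k⟩

lemma eventually_nhds_inv_natCast_eq {k : ℕ} (hk : k ≠ 0) :
    ∀ᶠ t in 𝓝 (k : ℝ)⁻¹, ∀ j : ℕ, t = (j : ℝ)⁻¹ → j = k := by
  have hinv : Tendsto (·⁻¹) (𝓝 (k : ℝ)⁻¹) (𝓝 (k : ℝ)) := by
    simpa using tendsto_inv₀ (inv_ne_zero (Nat.cast_ne_zero.mpr hk : (k : ℝ) ≠ 0))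
  filter_upwards [hinv (Metric.ball_mem_nhds _ one_pos)] with t ht j rfl
  rw [mem_preimage, inv_inv, Metric.mem_ball, Nat.dist_cast_real, Nat.dist_eq] at ht
  have : |(j : ℤ) - k| < 1 := by exact_mod_cast ht
  rw [Int.abs_lt_one_iff] at this
  omega

section Digits

lemma vval_nil : vval [] = 0 := by simp [vval]

lemma vval_cons (d : ℕ) (l : List ℕ) : vval (d :: l) = (d + vval l) / 3 := by
  simp only [vval, List.length_cons, Finset.sum_range_succ', List.getD_cons_succ,
    List.getD_cons_zero, zero_add, pow_one, add_div, Finset.sum_div, div_div, ← pow_succ]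
  ring

lemma aval_cons (d : ℕ) {l : List ℕ} (hl : l ≠ []) (k : ℕ) :
    aval (d :: l) k = (d + aval l k) / 3 := by
  obtain ⟨e, m, rfl⟩ := List.exists_cons_of_ne_nil hl
  simp only [aval, vval_cons d, List.length_cons, Nat.add_sub_cancel, List.getD_cons_succ,
    pow_succ (3 : ℝ) (m.length + 1 + 1), ← mul_assoc, div_mul_eq_div_div _ _ (3 : ℝ)]
  ring

lemma aval_one (k : ℕ) : aval [1] k = 1 / 3 + (k : ℝ)⁻¹ / 9 := by
  simp only [aval, vval_cons, vval_nil, List.length_singleton, Nat.sub_self, List.getD_cons_zero]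
  push_cast
  ring

lemma aval_two (k : ℕ) : aval [2] k = 2 / 3 - (k : ℝ)⁻¹ / 9 := by
  simp only [aval, vval_cons, vval_nil, List.length_singleton, Nat.sub_self, List.getD_cons_zero]
  push_cast
  ring

lemma tendsto_aval (l : List ℕ) : Tendsto (fun k ↦ aval l k) atTop (𝓝 (vval l)) := by
  have hgap := tendsto_const_div_atTop_nhds_zero_nat
    ((-1 : ℝ) ^ l.getD (l.length - 1) 0 / 3 ^ (l.length + 1))
  simpa only [aval, sub_zero, div_div, mul_comm] using hgap.const_sub (vval l)

lemma sgood_singleton {d : ℕ} : Sgood [d] ↔ d = 1 ∨ d = 2 := by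
  have hdigit : d ≤ 2 ∧ d ≠ 0 ↔ d = 1 ∨ d = 2 := by omega
  simpa [Sgood] using hdigit

lemma sgood_cons {d : ℕ} {l : List ℕ} (hl : l ≠ []) :
    Sgood (d :: l) ↔ (d = 0 ∨ d = 2) ∧ Sgood l := by
  obtain ⟨e, m, rfl⟩ := List.exists_cons_of_ne_nil hl
  have hdigit : d ≤ 2 ∧ d ≠ 1 ↔ d = 0 ∨ d = 2 := by omega
  simp only [Sgood, List.length_cons, Nat.add_sub_cancel, List.getD_cons_succ, ← hdigit,
    List.forall_mem_cons, Nat.forall_lt_succ_left, List.getD_cons_zero, ne_eq, reduceCtorEq,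
    not_false_eq_true, true_and]
  tauto

namespace Sgood

variable {l : List ℕ}

lemma ne_nil (hl : Sgood l) : l ≠ [] := hl.1

lemma cons {d : ℕ} (hd : d = 0 ∨ d = 2) (hl : Sgood l) : Sgood (d :: l) :=
  (sgood_cons hl.ne_nil).mpr ⟨hd, hl⟩

@[elab_as_elim]
lemma induction {P : (l : List ℕ) → Sgood l → Prop}
    (one : P [1] (sgood_singleton.mpr (.inl rfl))) (two : P [2] (sgood_singleton.mpr (.inr rfl)))
    (cons : ∀ (d : ℕ) (l : List ℕ) (hd : d = 0 ∨ d = 2) (hl : Sgood l), P l hl →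
      P (d :: l) (hl.cons hd)) {l : List ℕ} (hl : Sgood l) : P l hl := by
  induction l with
  | nil => exact absurd rfl hl.ne_nil
  | cons d l ih =>
    obtain rfl | hne := eq_or_ne l []
    · obtain rfl | rfl := sgood_singleton.mp hl
      · exact one
      · exact two
    · obtain ⟨hd, hl'⟩ := (sgood_cons hne).mp hl
      exact cons d l hd hl' (ih hl')

end Sgood

end Digits

section GapEndpoints

/-- The set `D` of the values `v(σ)`, `σ ∈ 𝔖`. These are the endpoints of the gaps of the Cantor
set, the final digit `1` giving left and the final digit `2` giving right endpoints. -/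
def gapEndpoints : Set ℝ := {x | ∃ l : List ℕ, Sgood l ∧ x = vval l}

lemma one_third_mem_gapEndpoints : 1 / 3 ∈ gapEndpoints :=
  ⟨[1], sgood_singleton.mpr (.inl rfl), by simp [vval_cons, vval_nil]⟩

lemma add_div_three_mem_gapEndpoints {d : ℕ} (hd : d = 0 ∨ d = 2) {x : ℝ}
    (hx : x ∈ gapEndpoints) : (d + x) / 3 ∈ gapEndpoints := by
  obtain ⟨l, hl, rfl⟩ := hx
  exact ⟨d :: l, hl.cons hd, (vval_cons d l).symm⟩

lemma gapEndpoints_subset_Ioo : gapEndpoints ⊆ Ioo 0 1 := by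
  rintro _ ⟨l, hl, rfl⟩
  induction hl using Sgood.induction with
  | one => norm_num [vval_cons, vval_nil]
  | two => norm_num [vval_cons, vval_nil]
  | cons d l hd _ ih =>
    obtain ⟨hpos, hlt⟩ := ih
    rw [vval_cons]
    rcases hd with rfl | rfl <;> push_cast <;> constructor <;> linarith

-- `d / 2` is the fixed point of the contraction `x ↦ (d + x) / 3`.
lemma half_digit_mem_closure_gapEndpoints {d : ℕ} (hd : d = 0 ∨ d = 2) :
    (d / 2 : ℝ) ∈ closure gapEndpoints := by
  have hiterate (n : ℕ) : (d / 2 + (1 / 3 - d / 2) * (1 / 3) ^ n : ℝ) ∈ gapEndpoints := by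
    induction n with
    | zero => simpa using one_third_mem_gapEndpoints
    | succ n ih =>
      convert add_div_three_mem_gapEndpoints hd ih using 1
      ring
  have hlim : Tendsto (fun n : ℕ ↦ (d / 2 + (1 / 3 - d / 2) * (1 / 3) ^ n : ℝ)) atTop
      (𝓝 (d / 2)) := by
    simpa using ((tendsto_pow_atTop_nhds_zero_of_lt_one (r := (1 / 3 : ℝ)) (by norm_num)
      (by norm_num)).const_mul (1 / 3 - d / 2 : ℝ)).const_add (d / 2 : ℝ)
  exact mem_closure_of_tendsto hlim (.of_forall hiterate)

lemma accPt_half_digit_gapEndpoints {d : ℕ} (hd : d = 0 ∨ d = 2) :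
    AccPt (d / 2 : ℝ) (𝓟 gapEndpoints) := by
  have hnotMem : (d / 2 : ℝ) ∉ gapEndpoints := fun hmem ↦ by
    rcases hd with rfl | rfl <;> simpa using gapEndpoints_subset_Ioo hmem
  rw [accPt_principal_iff_clusterPt, sdiff_singleton_eq_self hnotMem]
  exact mem_closure_iff_clusterPt.mp (half_digit_mem_closure_gapEndpoints hd)

lemma accPt_add_div_three_gapEndpoints {d : ℕ} (hd : d = 0 ∨ d = 2) {x : ℝ}
    (hx : AccPt x (𝓟 gapEndpoints)) : AccPt ((d + x) / 3) (𝓟 gapEndpoints) := by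
  have hinj : Function.Injective fun y : ℝ ↦ (d + y) / 3 := fun y z hyz ↦ by
    simpa using hyz
  refine (hx.map (by fun_prop) hinj).mono ?_
  rw [map_principal, principal_mono, image_subset_iff]
  exact fun y hy ↦ add_div_three_mem_gapEndpoints hd hy

theorem preperfect_gapEndpoints : Preperfect gapEndpoints := by
  rintro _ ⟨l, hl, rfl⟩
  induction hl using Sgood.induction with
  | one =>
    have h := accPt_add_div_three_gapEndpoints (.inl rfl) (accPt_half_digit_gapEndpoints (.inr rfl))
    simpa [vval_cons, vval_nil] using h
  | two =>
    have h := accPt_add_div_three_gapEndpoints (.inr rfl) (accPt_half_digit_gapEndpoints (.inl rfl))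
    simpa [vval_cons, vval_nil] using h
  | cons d l hd _ ih =>
    rw [vval_cons]
    exact accPt_add_div_three_gapEndpoints hd ih

end GapEndpoints

section GapPoints

/-- The set `E` of the points `a_{σ,k}`, `σ ∈ 𝔖`, `k ≥ 1`: for each endpoint `v(σ)` of a gap of the
Cantor set, a sequence in that gap converging to it. -/
def gapPoints : Set ℝ := {x | ∃ l : List ℕ, Sgood l ∧ ∃ k : ℕ, 1 ≤ k ∧ x = aval l k}

theorem gapEndpoints_subset_closure_gapPoints : gapEndpoints ⊆ closure gapPoints := by
  rintro _ ⟨l, hl, rfl⟩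
  exact mem_closure_of_tendsto (tendsto_aval l) <|
    (eventually_ge_atTop 1).mono fun k hk ↦ ⟨l, hl, k, hk, rfl⟩

theorem gapPoints_subset_Ioo : gapPoints ⊆ Ioo 0 1 := by
  rintro _ ⟨l, hl, k, hk, rfl⟩
  obtain ⟨hinv_pos, hinv_le⟩ := inv_natCast_mem_Ioc hk
  induction hl using Sgood.induction with
  | one =>
    rw [aval_one]
    constructor <;> linarith
  | two =>
    rw [aval_two]
    constructor <;> linarith
  | cons d l hd hl ih =>
    obtain ⟨hpos, hlt⟩ := ih
    rw [aval_cons d hl.ne_nil]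
    rcases hd with rfl | rfl <;> push_cast <;> constructor <;> linarith

lemma gapPoints_cases {x : ℝ} (hx : x ∈ gapPoints) :
    (∃ k : ℕ, 1 ≤ k ∧ x = 1 / 3 + (k : ℝ)⁻¹ / 9) ∨
      (∃ k : ℕ, 1 ≤ k ∧ x = 2 / 3 - (k : ℝ)⁻¹ / 9) ∨
      ∃ d : ℕ, (d = 0 ∨ d = 2) ∧ ∃ y ∈ gapPoints, x = (d + y) / 3 := by
  obtain ⟨l, hl, k, hk, rfl⟩ := hx
  cases hl using Sgood.induction with
  | one => exact .inl ⟨k, hk, aval_one k⟩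
  | two => exact .inr (.inl ⟨k, hk, aval_two k⟩)
  | cons d l hd hl => exact .inr (.inr ⟨d, hd, _, ⟨l, hl, k, hk, rfl⟩, aval_cons d hl.ne_nil k⟩)

lemma exists_eq_add_inv_of_mem_gapPoints {x : ℝ} (hx : x ∈ gapPoints)
    (hmem : x ∈ Ioo (1 / 3) (1 / 2)) : ∃ k : ℕ, x = 1 / 3 + (k : ℝ)⁻¹ / 9 := by
  obtain ⟨hgt, hlt⟩ := hmem
  obtain ⟨k, _, hk⟩ | ⟨k, hk, rfl⟩ | ⟨d, hd, y, hy, rfl⟩ := gapPoints_cases hx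
  · exact ⟨k, hk⟩
  · linarith [(inv_natCast_mem_Ioc hk).2]
  · obtain ⟨hpos, hlt_one⟩ := gapPoints_subset_Ioo hy
    rcases hd with rfl | rfl <;> push_cast at hgt hlt <;> linarith

lemma exists_eq_sub_inv_of_mem_gapPoints {x : ℝ} (hx : x ∈ gapPoints)
    (hmem : x ∈ Ioo (1 / 2) (2 / 3)) : ∃ k : ℕ, x = 2 / 3 - (k : ℝ)⁻¹ / 9 := by
  obtain ⟨hgt, hlt⟩ := hmem
  obtain ⟨k, hk, rfl⟩ | ⟨k, _, hk⟩ | ⟨d, hd, y, hy, rfl⟩ := gapPoints_cases hx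
  · linarith [(inv_natCast_mem_Ioc hk).2]
  · exact ⟨k, hk⟩
  · obtain ⟨hpos, hlt_one⟩ := gapPoints_subset_Ioo hy
    rcases hd with rfl | rfl <;> push_cast at hgt hlt <;> linarith

lemma three_mul_sub_mem_gapPoints {d : ℕ} (hd : d = 0 ∨ d = 2) {x : ℝ} (hx : x ∈ gapPoints)
    (hmem : 3 * x - d ∈ Ioo 0 1) : 3 * x - d ∈ gapPoints := by
  obtain ⟨hpos, hlt⟩ := hmem
  obtain ⟨k, hk, rfl⟩ | ⟨k, hk, rfl⟩ | ⟨e, he, y, hy, rfl⟩ := gapPoints_cases hx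
  · obtain ⟨hinv_pos, hinv_le⟩ := inv_natCast_mem_Ioc hk
    rcases hd with rfl | rfl <;> push_cast at hpos hlt <;> linarith
  · obtain ⟨hinv_pos, hinv_le⟩ := inv_natCast_mem_Ioc hk
    rcases hd with rfl | rfl <;> push_cast at hpos hlt <;> linarith
  · obtain ⟨hy_pos, hy_lt⟩ := gapPoints_subset_Ioo hy
    have hde : d = e := by
      rcases hd with rfl | rfl <;> rcases he with rfl | rfl <;> first
        | rfl
        | push_cast at hpos hlt; linarith
    subst hde
    convert hy using 1
    ring

lemma eventually_eq_aval_one_of_mem_gapPoints {k : ℕ} (hk : 1 ≤ k) :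
    ∀ᶠ x in 𝓝 (aval [1] k), x ∈ gapPoints → x = aval [1] k := by
  obtain ⟨hpos, hle⟩ := inv_natCast_mem_Ioc hk
  have hrescale : Tendsto (fun x : ℝ ↦ 9 * x - 3) (𝓝 (aval [1] k)) (𝓝 (k : ℝ)⁻¹) :=
    Continuous.tendsto' (by fun_prop) _ _ (by rw [aval_one]; ring)
  have hleft : Ioo (1 / 3) (1 / 2) ∈ 𝓝 (aval [1] k) := by
    rw [aval_one]
    exact Ioo_mem_nhds (by linarith) (by linarith)
  filter_upwards [hleft, hrescale.eventually (eventually_nhds_inv_natCast_eq (by omega))]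
    with x hx hinv hmem
  obtain ⟨j, rfl⟩ := exists_eq_add_inv_of_mem_gapPoints hmem hx
  rw [hinv j (by ring), aval_one]

lemma eventually_eq_aval_two_of_mem_gapPoints {k : ℕ} (hk : 1 ≤ k) :
    ∀ᶠ x in 𝓝 (aval [2] k), x ∈ gapPoints → x = aval [2] k := by
  obtain ⟨hpos, hle⟩ := inv_natCast_mem_Ioc hk
  have hrescale : Tendsto (fun x : ℝ ↦ 6 - 9 * x) (𝓝 (aval [2] k)) (𝓝 (k : ℝ)⁻¹) :=
    Continuous.tendsto' (by fun_prop) _ _ (by rw [aval_two]; ring)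
  have hright : Ioo (1 / 2) (2 / 3) ∈ 𝓝 (aval [2] k) := by
    rw [aval_two]
    exact Ioo_mem_nhds (by linarith) (by linarith)
  filter_upwards [hright, hrescale.eventually (eventually_nhds_inv_natCast_eq (by omega))]
    with x hx hinv hmem
  obtain ⟨j, rfl⟩ := exists_eq_sub_inv_of_mem_gapPoints hmem hx
  rw [hinv j (by ring), aval_two]

lemma eventually_eq_add_div_three_of_mem_gapPoints {d : ℕ} (hd : d = 0 ∨ d = 2) {y : ℝ}
    (hy : y ∈ gapPoints) (hisolated : ∀ᶠ x in 𝓝 y, x ∈ gapPoints → x = y) :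
    ∀ᶠ x in 𝓝 ((d + y) / 3), x ∈ gapPoints → x = (d + y) / 3 := by
  have hrescale : Tendsto (fun x : ℝ ↦ 3 * x - d) (𝓝 ((d + y) / 3)) (𝓝 y) :=
    Continuous.tendsto' (by fun_prop) _ _ (by ring)
  have hunit : Ioo 0 1 ∈ 𝓝 y := isOpen_Ioo.mem_nhds (gapPoints_subset_Ioo hy)
  filter_upwards [hrescale hunit, hrescale.eventually hisolated] with x hx heq hmem
  linarith [heq (three_mul_sub_mem_gapPoints hd hmem hx)]

theorem isDiscrete_gapPoints : IsDiscrete gapPoints := by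
  rw [isDiscrete_iff_eventually_eq]
  rintro _ ⟨l, hl, k, hk, rfl⟩
  induction hl using Sgood.induction with
  | one => exact eventually_eq_aval_one_of_mem_gapPoints hk
  | two => exact eventually_eq_aval_two_of_mem_gapPoints hk
  | cons d l hd hl ih =>
    rw [aval_cons d hl.ne_nil]
    exact eventually_eq_add_div_three_of_mem_gapPoints hd ⟨l, hl, k, hk, rfl⟩ ih

end GapPoints

theorem stmt_14 (D E : Set ℝ)
    (hD : D = {x : ℝ | ∃ l : List ℕ, Sgood l ∧ x = vval l})
    (hE : E = {x : ℝ | ∃ l : List ℕ, Sgood l ∧ ∃ k : ℕ, 1 ≤ k ∧ x = aval l k}) :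
    Bornology.IsBounded E ∧ IsDiscreteIn E ∧
      (∀ x ∈ D, x ∈ closure (D \ {x})) ∧ D ⊆ closure E ∧
      ¬∃ (n : ℕ) (S : Fin n → Set ℝ),
        (∀ i, IsDiscreteIn (S i)) ∧ closure E = ⋃ i, S i := by
  obtain rfl : D = gapEndpoints := hD
  obtain rfl : E = gapPoints := hE
  refine ⟨(Metric.isBounded_Ioo 0 1).subset gapPoints_subset_Ioo,
    isDiscreteIn_iff_isDiscrete.mpr isDiscrete_gapPoints,
    preperfect_iff_mem_closure_sdiff.mp preperfect_gapEndpoints,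
    gapEndpoints_subset_closure_gapPoints, ?_⟩
  rintro ⟨n, S, hS, hcover⟩
  have hsub : gapEndpoints ⊆ ⋃₀ range S := by
    rw [sUnion_range, ← hcover]
    exact gapEndpoints_subset_closure_gapPoints
  refine not_subset_sUnion_of_isDiscrete preperfect_gapEndpoints ⟨_, one_third_mem_gapEndpoints⟩
    (finite_range S) ?_ hsub
  exact forall_mem_range.mpr fun i ↦ isDiscreteIn_iff_isDiscrete.mp (hS i)
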